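/- arXiv:2601.13395 — 2 statements merged into one kernel-verified Lean document; each statement's English description precedes it below -/
import Mathlib

section
/- Under the hypotheses of the generalized adjoint constraint equations with m = n (x : ℂᵏ → ℂⁿ real-differentiable at p₀ with Wirtinger decomposition (Jx, Jx'); g : ℂⁿ × ℂᵏ → ℂⁿ real-differentiable at (x p₀, p₀) with joint decomposition matrices A, B ∈ Matrix n n ℂ and C, D ∈ Matrix n k ℂ; g(x p, p) = 0 near p₀), suppose in addition that the 2n×2n block matrix M with blocks [[A, B], [conj(B), conj(A)]] is invertible. Then the stacked 2n×k matrix with upper block Jx and lower block conj(Jx') equals M⁻¹ applied to the stacked matrix with upper block −C and lower block −conj(D); in particular Jx and Jx' are uniquely determined by A, B, C, D. -/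
/-!
A pair `(P, Q)` determines the real-linear map `v ↦ P v + Q v̄`, and the pair can be recovered from
the map by comparing its values at `v` and `I v`. Implicit differentiation of `g (x p, p) = 0` gives
an equation between such maps; its linear part `A Jx + B J̄x' + C = 0` and the conjugate
`B̄ Jx + Ā J̄x' + D̄ = 0` of its antilinear part are the two block rows of a linear system for
`Jx` and `J̄x'`, solved by inverting its coefficient matrix.
-/

section ImplicitDifferentiation

open scoped Topology

variable {𝕜 E F G : Type*} [NontriviallyNormedField 𝕜] [NormedAddCommGroup E] [NormedSpace 𝕜 E]
  [NormedAddCommGroup F] [NormedSpace 𝕜 F] [NormedAddCommGroup G] [NormedSpace 𝕜 G]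

theorem comp_add_eq_zero_of_hasFDerivAt_of_eventually_eq_const {x : E → F} {x' : E →L[𝕜] F}
    {g : F × E → G} {g₁ : F →L[𝕜] G} {g₂ : E →L[𝕜] G} {p₀ : E} {c : G}
    (hx : HasFDerivAt x x' p₀) (hg : HasFDerivAt g (g₁.coprod g₂) (x p₀, p₀))
    (hconst : ∀ᶠ p in 𝓝 p₀, g (x p, p) = c) :
    g₁ ∘L x' + g₂ = 0 := by
  have hcomp : HasFDerivAt (fun p => g (x p, p)) (g₁ ∘L x' + g₂) p₀ :=
    hg.comp (f := fun p => (x p, p)) p₀ (hx.prodMk (hasFDerivAt_id p₀))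
  exact hcomp.unique ((hasFDerivAt_const c p₀).congr_of_eventuallyEq hconst)

end ImplicitDifferentiation

section Wirtinger

open scoped ComplexConjugate Matrix Topology

variable {l m n : Type*} [Fintype n]

/-- The real-linear map `v ↦ P v + Q v̄` with Wirtinger decomposition `(P, Q)`. It is bundled as a
continuous `ℝ`-linear map so that it can serve as a real Fréchet derivative. -/
noncomputable def wirtingerMap (P Q : Matrix m n ℂ) : (n → ℂ) →L[ℝ] (m → ℂ) :=
  (LinearMap.toContinuousLinearMap P.mulVecLin).restrictScalars ℝ +
    (LinearMap.toContinuousLinearMap Q.mulVecLin).restrictScalars ℝ ∘L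
      (starL' ℝ : (n → ℂ) ≃L[ℝ] (n → ℂ))

theorem wirtingerMap_apply (P Q : Matrix m n ℂ) (v : n → ℂ) :
    wirtingerMap P Q v = P *ᵥ v + Q *ᵥ star v := rfl

theorem wirtingerMap_add (P Q P' Q' : Matrix m n ℂ) :
    wirtingerMap P Q + wirtingerMap P' Q' = wirtingerMap (P + P') (Q + Q') := by
  ext1 v
  simp only [add_apply, wirtingerMap_apply, Matrix.add_mulVec]
  abel

theorem star_wirtingerMap_apply (P Q : Matrix m n ℂ) (v : n → ℂ) :
    star (wirtingerMap P Q v) = wirtingerMap (Q.map conj) (P.map conj) v := by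
  have hstar (R : Matrix m n ℂ) (w : n → ℂ) : star (R *ᵥ w) = R.map conj *ᵥ star w :=
    funext fun i => RingHom.map_mulVec conj R w i
  rw [wirtingerMap_apply, wirtingerMap_apply, star_add, hstar, hstar, star_star, add_comm]

theorem wirtingerMap_comp [Fintype m] (A B : Matrix l m ℂ) (P Q : Matrix m n ℂ) :
    wirtingerMap A B ∘L wirtingerMap P Q =
      wirtingerMap (A * P + B * Q.map conj) (A * Q + B * P.map conj) := by
  ext1 v
  rw [ContinuousLinearMap.comp_apply, wirtingerMap_apply A B, star_wirtingerMap_apply]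
  simp only [wirtingerMap_apply, Matrix.add_mulVec, Matrix.mulVec_add, Matrix.mulVec_mulVec]
  abel

theorem wirtingerMap_I_smul (P Q : Matrix m n ℂ) (v : n → ℂ) :
    wirtingerMap P Q (Complex.I • v) = Complex.I • (P *ᵥ v - Q *ᵥ star v) := by
  simp [wirtingerMap_apply, Matrix.mulVec_smul, Matrix.mulVec_neg, sub_eq_add_neg]

theorem wirtingerMap_eq_zero_iff {P Q : Matrix m n ℂ} :
    wirtingerMap P Q = 0 ↔ P = 0 ∧ Q = 0 := by
  constructor
  · intro h
    have hadd (v : n → ℂ) : P *ᵥ v + Q *ᵥ star v = 0 := by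
      rw [← wirtingerMap_apply, h, zero_apply]
    have hsub (v : n → ℂ) : P *ᵥ v = Q *ᵥ star v := by
      have hI := wirtingerMap_I_smul P Q v
      rw [h, zero_apply, eq_comm, smul_eq_zero_iff_right Complex.I_ne_zero] at hI
      exact sub_eq_zero.mp hI
    have hP (v : n → ℂ) : P *ᵥ v = 0 := by
      rw [← self_eq_neg, eq_neg_iff_add_eq_zero]
      nth_rw 2 [hsub v]
      exact hadd v
    have hQ (v : n → ℂ) : Q *ᵥ v = 0 := by
      rw [← star_star v, ← hsub, hP]
    exact ⟨Matrix.ext_iff_mulVec.mpr fun v => by rw [hP, Matrix.zero_mulVec],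
      Matrix.ext_iff_mulVec.mpr fun v => by rw [hQ, Matrix.zero_mulVec]⟩
  · rintro ⟨rfl, rfl⟩
    ext1 v
    rw [wirtingerMap_apply, Matrix.zero_mulVec, Matrix.zero_mulVec, add_zero, zero_apply]

theorem generalized_adjoint_block_solution_general [Finite l] [Fintype m]
    {x : (n → ℂ) → m → ℂ} {p₀ : n → ℂ} {Jx Jx' : Matrix m n ℂ}
    (hx : HasFDerivAt x (wirtingerMap Jx Jx') p₀)
    {g : (m → ℂ) × (n → ℂ) → l → ℂ} {A B : Matrix l m ℂ} {C D : Matrix l n ℂ} {c : l → ℂ}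
    (hg : HasFDerivAt g ((wirtingerMap A B).coprod (wirtingerMap C D)) (x p₀, p₀))
    (hconstr : ∀ᶠ p in 𝓝 p₀, g (x p, p) = c) :
    Matrix.fromBlocks A B (B.map conj) (A.map conj) * Matrix.fromRows Jx (Jx'.map conj) =
      Matrix.fromRows (-C) (-(D.map conj)) := by
  have := Fintype.ofFinite l
  have hzero := comp_add_eq_zero_of_hasFDerivAt_of_eventually_eq_const hx hg hconstr
  rw [wirtingerMap_comp, wirtingerMap_add, wirtingerMap_eq_zero_iff] at hzero
  obtain ⟨hlin, hanti⟩ := hzero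
  have hconj : B.map conj * Jx + A.map conj * Jx'.map conj + D.map conj = 0 := by
    have hconj_conj : (Jx.map conj).map conj = Jx := by
      ext i j
      exact Complex.conj_conj (Jx i j)
    have hmap := congrArg (Matrix.map · conj) hanti
    simp only [Matrix.map_add _ (map_add conj), Matrix.map_mul, hconj_conj,
      Matrix.map_zero _ (map_zero conj)] at hmap
    rwa [add_comm (B.map conj * Jx)]
  rw [Matrix.fromBlocks_mul_fromRows, eq_neg_of_add_eq_zero_left hlin,
    eq_neg_of_add_eq_zero_left hconj]

end Wirtinger

/-- Generalized adjoint equation in block-matrix form: under the constraint equations with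
`m = n`, if the block matrix `M = [[A, B], [conj B, conj A]]` is invertible, then the stacked
matrix `[Jx; conj Jx']` equals `M⁻¹ · [-C; -conj D]`, so `Jx, Jx'` are uniquely determined. -/
theorem generalized_adjoint_block_solution (n k : ℕ)
    (x : (Fin k → ℂ) → (Fin n → ℂ)) (p₀ : Fin k → ℂ)
    (hx : DifferentiableAt ℝ x p₀)
    (Jx Jx' : Matrix (Fin n) (Fin k) ℂ)
    (hJx : ∀ v : Fin k → ℂ,
      fderiv ℝ x p₀ v = Jx.mulVec v + Jx'.mulVec (fun j => starRingEnd ℂ (v j)))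
    (g : (Fin n → ℂ) × (Fin k → ℂ) → Fin n → ℂ)
    (hg : DifferentiableAt ℝ g (x p₀, p₀))
    (A B : Matrix (Fin n) (Fin n) ℂ) (C D : Matrix (Fin n) (Fin k) ℂ)
    (hABCD : ∀ (u : Fin n → ℂ) (w : Fin k → ℂ),
      fderiv ℝ g (x p₀, p₀) (u, w) =
        A.mulVec u + B.mulVec (fun j => starRingEnd ℂ (u j)) +
        C.mulVec w + D.mulVec (fun j => starRingEnd ℂ (w j)))
    (hconstr : ∀ᶠ p in nhds p₀, g (x p, p) = 0)
    (hM : IsUnit (Matrix.fromBlocks A B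
      (B.map (starRingEnd ℂ)) (A.map (starRingEnd ℂ))).det) :
    Matrix.fromRows Jx (Jx'.map (starRingEnd ℂ)) =
      (Matrix.fromBlocks A B (B.map (starRingEnd ℂ)) (A.map (starRingEnd ℂ)))⁻¹ *
        Matrix.fromRows (-C) (-(D.map (starRingEnd ℂ))) := by
  have hx' : HasFDerivAt x (wirtingerMap Jx Jx') p₀ :=
    hx.hasFDerivAt.congr_fderiv (ContinuousLinearMap.ext hJx)
  have hg' : HasFDerivAt g ((wirtingerMap A B).coprod (wirtingerMap C D)) (x p₀, p₀) :=
    hg.hasFDerivAt.congr_fderiv (ContinuousLinearMap.ext fun ⟨u, w⟩ =>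
      (hABCD u w).trans (add_assoc _ _ _))
  rw [← generalized_adjoint_block_solution_general hx' hg' hconstr,
    Matrix.nonsing_inv_mul_cancel_left _ _ hM]
end

section
/- Under the hypotheses of the generalized adjoint constraint equations with m = n (x : ℂᵏ → ℂⁿ real-differentiable at p₀ with Wirtinger decomposition (Jx, Jx'); g : ℂⁿ × ℂᵏ → ℂⁿ real-differentiable at (x p₀, p₀) with joint decomposition matrices A, B, C, D; g(x p, p) = 0 near p₀), suppose that g is holomorphic in both arguments (B = 0 and D = 0), that x is holomorphic in p (Jx' = 0), and that A is invertible. Then Jx = −A⁻¹·C, and for any f : ℂⁿ × ℂᵏ → ℝ real-differentiable at (x p₀, p₀) with (fderiv ℝ f (x p₀, p₀))(u, w) = 2·Re(Σⱼ aⱼ·uⱼ) + 2·Re(Σⱼ cⱼ·wⱼ), the derivative of p ↦ f(x p, p) at p₀ in direction w equals 2·Re( Σⱼ aⱼ·(−A⁻¹·C·w)ⱼ + Σⱼ cⱼ·wⱼ ). -/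
/-!
The derivative of `p ↦ g (x p, p)` at `p₀` is an `ℝ`-linear map whose `ℂ`-linear part is
`A * Jx + B * conj Jx' + C`. The constraint makes this derivative vanish, and the `ℂ`-linear part
of an `ℝ`-linear map is unique, so `A * Jx + B * conj Jx' + C = 0`. When `Jx' = 0` this reads
`A * Jx = -C`, and the derivative of the cost follows from the chain rule.
-/

open scoped Matrix

section ChainRule

variable {𝕜 E F G : Type*} [NontriviallyNormedField 𝕜]
  [NormedAddCommGroup E] [NormedSpace 𝕜 E] [NormedAddCommGroup F] [NormedSpace 𝕜 F]
  [NormedAddCommGroup G] [NormedSpace 𝕜 G]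
  {x : E → F} {x' : E →L[𝕜] F} {g : F × E → G} {g' : F × E →L[𝕜] G} {p₀ : E}

theorem hasFDerivAt_comp_graph (hg : HasFDerivAt g g' (x p₀, p₀)) (hx : HasFDerivAt x x' p₀) :
    HasFDerivAt (fun p => g (x p, p)) (g' ∘L x'.prod (.id 𝕜 E)) p₀ :=
  HasFDerivAt.comp (g := g) p₀ hg (hx.prodMk (hasFDerivAt_id p₀))

theorem apply_graph_eq_zero_of_eventually_eq_zero (hg : HasFDerivAt g g' (x p₀, p₀))
    (hx : HasFDerivAt x x' p₀) (hconstr : ∀ᶠ p in nhds p₀, g (x p, p) = 0) (v : E) :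
    g' (x' v, v) = 0 := by
  have hzero : HasFDerivAt (fun p => g (x p, p)) (0 : E →L[𝕜] G) p₀ :=
    (hasFDerivAt_const 0 p₀).congr_of_eventuallyEq hconstr
  exact DFunLike.congr_fun ((hasFDerivAt_comp_graph hg hx).unique hzero) v

end ChainRule

section Wirtinger

variable {ι κ μ : Type*} [Fintype ι] [Fintype κ]

/-- The pair `(J, J')` is the Wirtinger decomposition of `L`: `J` is its `ℂ`-linear and `J'` its
conjugate-linear part. `L` is a bare function because the formula forces it to be `ℝ`-linear. -/
def IsWirtingerDecomposition (L : (κ → ℂ) → μ → ℂ) (J J' : Matrix μ κ ℂ) : Prop :=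
  ∀ v, L v = J *ᵥ v + J' *ᵥ star v

/-- The matrices `A, B, C, D` are the joint Wirtinger decomposition of a map `L` of two complex
vectors: `(A, B)` decomposes it in the first argument and `(C, D)` in the second. -/
def IsJointWirtingerDecomposition (L : (ι → ℂ) × (κ → ℂ) → μ → ℂ)
    (A B : Matrix μ ι ℂ) (C D : Matrix μ κ ℂ) : Prop :=
  ∀ u w, L (u, w) = A *ᵥ u + B *ᵥ star u + C *ᵥ w + D *ᵥ star w

theorem IsWirtingerDecomposition.linear_part_unique {L : (κ → ℂ) → μ → ℂ}
    {J J' K K' : Matrix μ κ ℂ} (hJ : IsWirtingerDecomposition L J J')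
    (hK : IsWirtingerDecomposition L K K') : J = K := by
  refine Matrix.mulVec_injective (funext fun v => ?_)
  have h_at_v : J *ᵥ v + J' *ᵥ star v = K *ᵥ v + K' *ᵥ star v := (hJ v).symm.trans (hK v)
  have h_at_I_smul :
      Complex.I • (J *ᵥ v - J' *ᵥ star v) = Complex.I • (K *ᵥ v - K' *ᵥ star v) := by
    simpa [Matrix.mulVec_smul, Matrix.mulVec_neg, smul_sub, sub_eq_add_neg] using
      (hJ (Complex.I • v)).symm.trans (hK (Complex.I • v))
  have h_diff := smul_right_injective _ Complex.I_ne_zero h_at_I_smul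
  ext j
  have h_sum_j := congrFun h_at_v j
  have h_diff_j := congrFun h_diff j
  simp only [Pi.add_apply, Pi.sub_apply] at h_sum_j h_diff_j
  linear_combination (h_sum_j + h_diff_j) / 2

theorem IsJointWirtingerDecomposition.comp_graph {L : (ι → ℂ) × (κ → ℂ) → μ → ℂ}
    {A B : Matrix μ ι ℂ} {C D : Matrix μ κ ℂ} {M : (κ → ℂ) → ι → ℂ} {J J' : Matrix ι κ ℂ}
    (hL : IsJointWirtingerDecomposition L A B C D) (hM : IsWirtingerDecomposition M J J') :
    IsWirtingerDecomposition (fun v => L (M v, v))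
      (A * J + B * J'.map star + C) (A * J' + B * J.map star + D) := by
  have star_mulVec (N : Matrix ι κ ℂ) (v : κ → ℂ) : star (N *ᵥ v) = N.map star *ᵥ star v :=
    (N.star_mulVec v).trans (Nᴴ.mulVec_transpose (star v)).symm
  intro v
  refine (hL (M v) v).trans ?_
  simp only [hM v, star_add, star_mulVec, star_star, Matrix.mulVec_add, Matrix.add_mulVec,
    ← Matrix.mulVec_mulVec]
  abel

variable {x : (κ → ℂ) → ι → ℂ} {p₀ : κ → ℂ} {Jx Jx' : Matrix ι κ ℂ}
  {g : (ι → ℂ) × (κ → ℂ) → μ → ℂ} {A B : Matrix μ ι ℂ} {C D : Matrix μ κ ℂ}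

theorem linear_part_constraint_equation [Finite μ] (hx : DifferentiableAt ℝ x p₀)
    (hJx : IsWirtingerDecomposition (fderiv ℝ x p₀) Jx Jx')
    (hg : DifferentiableAt ℝ g (x p₀, p₀))
    (hABCD : IsJointWirtingerDecomposition (fderiv ℝ g (x p₀, p₀)) A B C D)
    (hconstr : ∀ᶠ p in nhds p₀, g (x p, p) = 0) :
    A * Jx + B * Jx'.map star + C = 0 := by
  cases nonempty_fintype μ
  have hzero : IsWirtingerDecomposition
      (fun v => fderiv ℝ g (x p₀, p₀) (fderiv ℝ x p₀ v, v)) 0 0 := fun v => by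
    simpa using apply_graph_eq_zero_of_eventually_eq_zero hg.hasFDerivAt hx.hasFDerivAt hconstr v
  exact (hABCD.comp_graph hJx).linear_part_unique hzero

theorem adjoint_all_holomorphic_cost_derivative_general [Fintype μ] [DecidableEq ι]
    (hx : DifferentiableAt ℝ x p₀) (hJx : IsWirtingerDecomposition (fderiv ℝ x p₀) Jx 0)
    (hg : DifferentiableAt ℝ g (x p₀, p₀))
    (hABCD : IsJointWirtingerDecomposition (fderiv ℝ g (x p₀, p₀)) A B C D)
    (hconstr : ∀ᶠ p in nhds p₀, g (x p, p) = 0)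
    {Ainv : Matrix ι μ ℂ} (hA : Ainv * A = 1)
    {f : (ι → ℂ) × (κ → ℂ) → ℝ} (hf : DifferentiableAt ℝ f (x p₀, p₀))
    {a : ι → ℂ} {c : κ → ℂ}
    (hfd : ∀ u w, fderiv ℝ f (x p₀, p₀) (u, w) = 2 * (a ⬝ᵥ u).re + 2 * (c ⬝ᵥ w).re) :
    Jx = -(Ainv * C) ∧
    ∀ w, fderiv ℝ (fun p => f (x p, p)) p₀ w =
      2 * (a ⬝ᵥ (-(Ainv * C)) *ᵥ w + c ⬝ᵥ w).re := by
  have hAJx : A * Jx = -C := by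
    simpa [add_eq_zero_iff_eq_neg] using linear_part_constraint_equation hx hJx hg hABCD hconstr
  have hJx_eq : Jx = -(Ainv * C) := by
    rw [← Matrix.mul_neg, ← hAJx, ← Matrix.mul_assoc, hA, Matrix.one_mul]
  refine ⟨hJx_eq, fun w => ?_⟩
  have hx_w : fderiv ℝ x p₀ w = -(Ainv * C) *ᵥ w := by
    rw [hJx w, Matrix.zero_mulVec, add_zero, hJx_eq]
  calc fderiv ℝ (fun p => f (x p, p)) p₀ w
      = fderiv ℝ f (x p₀, p₀) (fderiv ℝ x p₀ w, w) := by
        rw [(hasFDerivAt_comp_graph hf.hasFDerivAt hx.hasFDerivAt).fderiv]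
        rfl
    _ = 2 * (a ⬝ᵥ (-(Ainv * C)) *ᵥ w + c ⬝ᵥ w).re := by
        rw [hfd, hx_w, Complex.add_re, mul_add]

end Wirtinger

/-- Adjoint method when everything but the cost is holomorphic: if `B = 0`, `D = 0`,
`Jx' = 0` and `A` is invertible, then `Jx = -A⁻¹·C`, and for a cost `f` with real derivative
`(u, w) ↦ 2 Re (∑ aⱼ uⱼ) + 2 Re (∑ cⱼ wⱼ)` at `(x p₀, p₀)`, the derivative of
`p ↦ f (x p, p)` at `p₀` in direction `w` is `2 Re (∑ aⱼ (-A⁻¹·C·w)ⱼ + ∑ cⱼ wⱼ)`. -/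
theorem adjoint_all_holomorphic_cost_derivative (n k : ℕ)
    (x : (Fin k → ℂ) → (Fin n → ℂ)) (p₀ : Fin k → ℂ)
    (hx : DifferentiableAt ℝ x p₀)
    (Jx Jx' : Matrix (Fin n) (Fin k) ℂ)
    (hJx : ∀ v : Fin k → ℂ,
      fderiv ℝ x p₀ v = Jx.mulVec v + Jx'.mulVec (fun j => starRingEnd ℂ (v j)))
    (g : (Fin n → ℂ) × (Fin k → ℂ) → Fin n → ℂ)
    (hg : DifferentiableAt ℝ g (x p₀, p₀))
    (A B : Matrix (Fin n) (Fin n) ℂ) (C D : Matrix (Fin n) (Fin k) ℂ)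
    (hABCD : ∀ (u : Fin n → ℂ) (w : Fin k → ℂ),
      fderiv ℝ g (x p₀, p₀) (u, w) =
        A.mulVec u + B.mulVec (fun j => starRingEnd ℂ (u j)) +
        C.mulVec w + D.mulVec (fun j => starRingEnd ℂ (w j)))
    (hconstr : ∀ᶠ p in nhds p₀, g (x p, p) = 0)
    (hB : B = 0) (hD : D = 0) (hJx' : Jx' = 0) (hA : IsUnit A.det)
    (f : (Fin n → ℂ) × (Fin k → ℂ) → ℝ)
    (hf : DifferentiableAt ℝ f (x p₀, p₀))
    (a : Fin n → ℂ) (c : Fin k → ℂ)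
    (hfd : ∀ (u : Fin n → ℂ) (w : Fin k → ℂ),
      fderiv ℝ f (x p₀, p₀) (u, w) =
        2 * (∑ j, a j * u j).re + 2 * (∑ j, c j * w j).re) :
    Jx = -(A⁻¹ * C) ∧
    ∀ w : Fin k → ℂ,
      fderiv ℝ (fun p => f (x p, p)) p₀ w =
        2 * ((∑ j, a j * (-(A⁻¹ * C)).mulVec w j) + ∑ j, c j * w j).re := by
  subst hJx'
  exact adjoint_all_holomorphic_cost_derivative_general hx hJx hg hABCD hconstr
    (Matrix.nonsing_inv_mul A hA) hf hfd
end
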